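/- Let n ≥ 2 be an integer and let c ∈ (0,1). There exists c′ ∈ (0,1), depending only on n and c, with the following property: for every Lebesgue-measurable set E ⊆ ℝⁿ with 0 < λ(E) < ∞ satisfying J_n(E) ≥ c·n(n+1)·λ(E)², there exists a measurable set E′ ⊆ E with λ(E′) ≥ c′·λ(E) such that for every x ∈ E′ there is a measurable set F_x ⊆ ℝⁿ which is star-convex at x and satisfies c′·λ(E) ≤ λ(F_x) ≤ c′^{−1}·λ(E) and λ(F_x ∩ E) ≥ c′·λ(E). -/

import Mathlib

open MeasureTheory
open scoped ENNReal

noncomputable section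

/-- `Jn n E` is the `(n+1)`-st power of the `L^{n+1}` norm of the X-ray transform of the
indicator of `E`: the integral over directions `ξ` in the unit sphere (with the standard
unnormalized surface measure `volume.toSphere`) and points `x ∈ E` of the `n`-th power of
the length of the chord of `E` through `x` in direction `ξ`. -/
def Jn (n : ℕ) (E : Set (EuclideanSpace ℝ (Fin n))) : ℝ≥0∞ :=
  ∫⁻ ξ : Metric.sphere (0 : EuclideanSpace ℝ (Fin n)) 1,
    (∫⁻ x in E, (volume {t : ℝ | x + t • (ξ : EuclideanSpace ℝ (Fin n)) ∈ E}) ^ n)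
    ∂((volume : Measure (EuclideanSpace ℝ (Fin n))).toSphere)

/-- Integration in polar coordinates. -/
theorem lintegral_eq_lintegral_toSphere {V : Type*} [NormedAddCommGroup V] [NormedSpace ℝ V]
    [FiniteDimensional ℝ V] [MeasurableSpace V] [BorelSpace V] [Nontrivial V] (μ : Measure V)
    [μ.IsAddHaarMeasure] {f : V → ℝ≥0∞} (hf : Measurable f) :
    ∫⁻ v, f v ∂μ = ∫⁻ ξ : Metric.sphere (0 : V) 1, (∫⁻ r in Set.Ioi (0 : ℝ),
      ‖r‖ₑ ^ (Module.finrank ℝ V - 1) * f (r • (ξ : V))) ∂μ.toSphere := by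
  set m := Module.finrank ℝ V - 1
  have hcont : Measurable fun p : Metric.sphere (0 : V) 1 × Set.Ioi (0 : ℝ) ↦
      f ((p.2 : ℝ) • (p.1 : V)) := by
    apply hf.comp
    fun_prop
  calc ∫⁻ v, f v ∂μ = ∫⁻ v : ({(0 : V)}ᶜ : Set V), f v ∂(μ.comap (↑)) := by
        rw [lintegral_subtype_comap (MeasurableSet.singleton _).compl, restrict_compl_singleton]
    _ = ∫⁻ p, f ((p.2 : ℝ) • (p.1 : V)) ∂μ.toSphere.prod (Measure.volumeIoiPow m) := by
        rw [← μ.measurePreserving_homeomorphUnitSphereProd.lintegral_comp hcont]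
        refine lintegral_congr fun v ↦ ?_
        have hv : ‖(v : V)‖ ≠ 0 := norm_ne_zero_iff.2 v.2
        simp [smul_smul, hv]
    _ = _ := by
        rw [lintegral_prod _ hcont.aemeasurable]
        refine lintegral_congr fun ξ ↦ ?_
        have hξ : Measurable fun r : Set.Ioi (0 : ℝ) ↦ f ((r : ℝ) • (ξ : V)) :=
          hcont.comp measurable_prodMk_left
        rw [Measure.volumeIoiPow, lintegral_withDensity_eq_lintegral_mul _ (by fun_prop) hξ,
          ← lintegral_subtype_comap measurableSet_Ioi]
        refine lintegral_congr fun r ↦ ?_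
        simp [Real.enorm_eq_ofReal (le_of_lt r.2), ENNReal.ofReal_pow (le_of_lt r.2)]

/-- The volume of a set, computed along the lines through a point `x`; every line is counted
twice. -/
theorem two_mul_measure_eq_lintegral_toSphere {V : Type*} [NormedAddCommGroup V]
    [NormedSpace ℝ V] [FiniteDimensional ℝ V] [MeasurableSpace V] [BorelSpace V] [Nontrivial V]
    (μ : Measure V) [μ.IsAddHaarMeasure] {A : Set V} (hA : MeasurableSet A) (x : V) :
    2 * μ A = ∫⁻ ξ : Metric.sphere (0 : V) 1, (∫⁻ r in {r : ℝ | x + r • (ξ : V) ∈ A},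
      ‖r‖ₑ ^ (Module.finrank ℝ V - 1)) ∂μ.toSphere := by
  set m := Module.finrank ℝ V - 1
  have hind : Measurable (A.indicator (1 : V → ℝ≥0∞)) := measurable_one.indicator hA
  have hpos : μ A = ∫⁻ ξ : Metric.sphere (0 : V) 1, (∫⁻ r in Set.Ioi (0 : ℝ),
      ‖r‖ₑ ^ m * A.indicator 1 (x + r • (ξ : V))) ∂μ.toSphere := by
    rw [← lintegral_eq_lintegral_toSphere μ (f := fun v ↦ A.indicator 1 (x + v)) (by fun_prop),
      lintegral_add_left_eq_self (A.indicator 1) x, lintegral_indicator_one hA]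
  have hneg : μ A = ∫⁻ ξ : Metric.sphere (0 : V) 1, (∫⁻ r in Set.Iio (0 : ℝ),
      ‖r‖ₑ ^ m * A.indicator 1 (x + r • (ξ : V))) ∂μ.toSphere := by
    have key : μ A = ∫⁻ ξ : Metric.sphere (0 : V) 1, (∫⁻ r in Set.Ioi (0 : ℝ),
        ‖r‖ₑ ^ m * A.indicator 1 (x - r • (ξ : V))) ∂μ.toSphere := by
      rw [← lintegral_eq_lintegral_toSphere μ (f := fun v ↦ A.indicator 1 (x - v)) (by fun_prop),
        lintegral_sub_left_eq_self (A.indicator 1) x, lintegral_indicator_one hA]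
    rw [key]
    refine lintegral_congr fun ξ ↦ ?_
    rw [← lintegral_indicator measurableSet_Ioi, ← lintegral_indicator measurableSet_Iio,
      ← lintegral_neg_eq_self]
    refine lintegral_congr fun r ↦ ?_
    by_cases hr : r < 0 <;> simp [hr]
  have hmeas : Measurable fun p : Metric.sphere (0 : V) 1 × ℝ ↦
      ‖p.2‖ₑ ^ m * A.indicator 1 (x + p.2 • (p.1 : V)) := by
    fun_prop
  rw [two_mul]
  nth_rw 1 [hpos]
  rw [hneg, ← lintegral_add_left hmeas.lintegral_prod_right']
  refine lintegral_congr fun ξ ↦ ?_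
  have hS : MeasurableSet {r : ℝ | x + r • (ξ : V) ∈ A} :=
    hA.preimage (f := fun r : ℝ ↦ x + r • (ξ : V)) (by fun_prop)
  rw [add_comm]
  dsimp only
  rw [Measure.restrict_congr_set Ioi_ae_eq_Ici, ← Set.compl_Iio,
    lintegral_add_compl _ measurableSet_Iio, ← lintegral_indicator hS]
  refine lintegral_congr fun r ↦ ?_
  by_cases hr : x + r • (ξ : V) ∈ A <;> simp [hr]

theorem pow_mul_volume_sdiff_le (A : Set ℝ) (m : ℕ) (M : ℝ≥0∞) :
    M ^ m * volume (A \ {r | ‖r‖ₑ ≤ M}) ≤ ∫⁻ r in A, ‖r‖ₑ ^ m := by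
  calc M ^ m * volume (A \ {r | ‖r‖ₑ ≤ M})
      = ∫⁻ _ in A \ {r | ‖r‖ₑ ≤ M}, M ^ m := by simp
    _ ≤ ∫⁻ r in A \ {r | ‖r‖ₑ ≤ M}, ‖r‖ₑ ^ m := by
        refine setLIntegral_mono (by fun_prop) fun r hr ↦ ?_
        gcongr
        exact (not_le.1 hr.2).le
    _ ≤ _ := lintegral_mono_set Set.sdiff_subset

theorem volume_setOf_enorm_le (M : ℝ≥0∞) : volume {r : ℝ | ‖r‖ₑ ≤ M} = 2 * M := by
  induction M with
  | top => simp [ENNReal.mul_top]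
  | coe M =>
    have : {r : ℝ | ‖r‖ₑ ≤ M} = Metric.closedBall 0 M := by
      ext r
      simp [enorm_le_coe, ← NNReal.coe_le_coe]
    rw [this, Real.volume_closedBall, ENNReal.ofReal_mul zero_le_two]
    simp

theorem volume_pow_succ_le (A : Set ℝ) (m : ℕ) :
    volume A ^ (m + 1) ≤ 8 ^ (m + 1) * ∫⁻ r in A, ‖r‖ₑ ^ m := by
  obtain hA | hA := eq_or_ne (volume A) ⊤
  · have h := pow_mul_volume_sdiff_le A m 1
    have h1 : volume (A \ {r | ‖r‖ₑ ≤ 1}) = ⊤ := by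
      refine top_unique (le_trans ?_ (le_measure_sdiff (μ := volume)))
      rw [hA, volume_setOf_enorm_le, mul_one, ENNReal.top_sub (by simp)]
    rw [h1, one_pow, one_mul, top_le_iff] at h
    rw [h, ENNReal.mul_top (by simp)]
    exact le_top
  · have h := pow_mul_volume_sdiff_le A m (volume A / 4)
    have h1 : volume A / 2 ≤ volume (A \ {r | ‖r‖ₑ ≤ volume A / 4}) := by
      refine le_trans ?_ (le_measure_sdiff (μ := volume))
      rw [volume_setOf_enorm_le]
      refine ENNReal.le_sub_of_add_le_right (by finiteness) ?_
      have h2 : (2 : ℝ≥0∞) * (volume A / 4) = volume A / 2 := by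
        rw [← ENNReal.mul_right_inj (a := 2) (by simp) (by simp), ← mul_assoc,
          ENNReal.mul_div_cancel (by simp) (by simp)]
        norm_num
        exact ENNReal.mul_div_cancel (by simp) (by simp)
      rw [h2, ENNReal.add_halves]
    calc volume A ^ (m + 1) ≤ 8 ^ (m + 1) * ((volume A / 4) ^ m * (volume A / 2)) := by
          have h4 : (8 : ℝ≥0∞) * (volume A / 4) = 2 * volume A := by
            rw [show (8 : ℝ≥0∞) = 2 * 4 by norm_num, mul_assoc,
              ENNReal.mul_div_cancel (by simp) (by simp)]
          have h2 : (8 : ℝ≥0∞) * (volume A / 2) = 4 * volume A := by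
            rw [show (8 : ℝ≥0∞) = 4 * 2 by norm_num, mul_assoc,
              ENNReal.mul_div_cancel (by simp) (by simp)]
          calc volume A ^ (m + 1) = volume A ^ m * volume A := pow_succ _ _
            _ ≤ (8 * (volume A / 4)) ^ m * (8 * (volume A / 2)) := by
              rw [h4, h2]
              gcongr
              · exact le_mul_of_one_le_left' (by norm_num)
              · exact le_mul_of_one_le_left' (by norm_num)
            _ = _ := by rw [mul_pow]; ring
      _ ≤ _ := by gcongr; exact le_trans (by gcongr) h

theorem volume_pow_succ_le_add (A : Set ℝ) {m : ℕ} (hm : 1 ≤ m) {K : ℝ≥0∞} (hK : 1 ≤ K)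
    (hK' : K ≠ ⊤) :
    volume A ^ (m + 1) ≤ 16 ^ (m + 1) * (∫⁻ r in A ∩ {r | ‖r‖ₑ ≤ K * volume A}, ‖r‖ₑ ^ m)
      + 2 / K * ∫⁻ r in A, ‖r‖ₑ ^ m := by
  set B : Set ℝ := {r | ‖r‖ₑ ≤ K * volume A} with hB
  have hK0 : K ≠ 0 := (zero_lt_one.trans_le hK).ne'
  by_cases h : volume A ≤ 2 * volume (A ∩ B)
  · refine le_add_right ?_
    calc volume A ^ (m + 1) ≤ (2 * volume (A ∩ B)) ^ (m + 1) := by gcongr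
      _ = 2 ^ (m + 1) * volume (A ∩ B) ^ (m + 1) := mul_pow _ _ _
      _ ≤ 2 ^ (m + 1) * (8 ^ (m + 1) * ∫⁻ r in A ∩ B, ‖r‖ₑ ^ m) := by
          gcongr
          exact volume_pow_succ_le _ _
      _ = _ := by rw [← mul_assoc, ← mul_pow]; norm_num
  · refine le_add_left ?_
    have h1 : volume A ≤ 2 * volume (A \ B) := by
      by_contra! h2
      have h3 := measure_le_inter_add_sdiff volume A B
      rw [not_le] at h
      refine lt_irrefl (2 * volume A) ?_
      calc 2 * volume A ≤ 2 * (volume (A ∩ B) + volume (A \ B)) := by gcongr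
        _ = 2 * volume (A ∩ B) + 2 * volume (A \ B) := mul_add _ _ _
        _ < volume A + volume A := ENNReal.add_lt_add h h2
        _ = 2 * volume A := (two_mul _).symm
    calc volume A ^ (m + 1) = volume A ^ m * volume A := pow_succ _ _
      _ ≤ volume A ^ m * (2 * volume (A \ B)) := by gcongr
      _ = K * K⁻¹ * volume A ^ m * (2 * volume (A \ B)) := by
          rw [ENNReal.mul_inv_cancel hK0 hK', one_mul]
      _ ≤ K ^ m * K⁻¹ * volume A ^ m * (2 * volume (A \ B)) := by
          gcongr
          exact le_self_pow₀ hK (by lia)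
      _ = 2 / K * ((K * volume A) ^ m * volume (A \ B)) := by
          rw [mul_pow, div_eq_mul_inv]; ring
      _ ≤ _ := by gcongr; exact pow_mul_volume_sdiff_le A m _

theorem setLIntegral_enorm_pow_le (M : ℝ≥0∞) (m : ℕ) :
    ∫⁻ r in {r : ℝ | ‖r‖ₑ ≤ M}, ‖r‖ₑ ^ m ≤ 2 * M ^ (m + 1) := by
  calc ∫⁻ r in {r : ℝ | ‖r‖ₑ ≤ M}, ‖r‖ₑ ^ m ≤ ∫⁻ _ in {r : ℝ | ‖r‖ₑ ≤ M}, M ^ m := by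
        refine setLIntegral_mono (by fun_prop) fun r hr ↦ ?_
        gcongr
        exact hr
    _ = _ := by rw [setLIntegral_const, volume_setOf_enorm_le]; ring

section ChordHull

variable {V : Type*} [NormedAddCommGroup V] [NormedSpace ℝ V]

/-- The set of points `y` whose distance to `x` is at most `K` times the length of the chord
of `E` along the line through `x` and `y`. -/
def chordHull (K : ℝ≥0∞) (E : Set V) (x : V) : Set V :=
  {y | 1 ≤ K * volume {t : ℝ | x + t • (y - x) ∈ E}}

theorem volume_chord_smul (E : Set V) (x v : V) {r : ℝ} (hr : r ≠ 0) :
    volume {t : ℝ | x + t • r • v ∈ E} = ‖r‖ₑ⁻¹ * volume {t : ℝ | x + t • v ∈ E} := by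
  have := Real.volume_preimage_mul_right hr {t : ℝ | x + t • v ∈ E}
  simpa [Set.preimage, mul_smul, Real.enorm_eq_ofReal_abs, abs_inv,
    ENNReal.ofReal_inv_of_pos (abs_pos.2 hr)] using this

theorem add_smul_mem_chordHull {K : ℝ≥0∞} {E : Set V} {x v : V} {r : ℝ} (hr : r ≠ 0) :
    x + r • v ∈ chordHull K E x ↔ ‖r‖ₑ ≤ K * volume {t : ℝ | x + t • v ∈ E} := by
  have h0 : ‖r‖ₑ ≠ 0 := by simpa
  rw [chordHull, Set.mem_ofPred_eq, add_sub_cancel_left, volume_chord_smul E x v hr,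
    mul_left_comm, mul_comm, ← div_eq_mul_inv, ENNReal.le_div_iff_mul_le (.inl h0) (.inl (by simp)),
    one_mul]

theorem self_mem_chordHull {K : ℝ≥0∞} (hK : K ≠ 0) {E : Set V} {x : V} (hx : x ∈ E) :
    x ∈ chordHull K E x := by
  simp [chordHull, hx, hK, ENNReal.mul_top]

theorem starConvex_chordHull {K : ℝ≥0∞} (hK : K ≠ 0) {E : Set V} {x : V} (hx : x ∈ E) :
    StarConvex ℝ x (chordHull K E x) := by
  rw [starConvex_iff_forall_pos (self_mem_chordHull hK hx)]
  intro y hy a b ha hb hab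
  have h : a • x + b • y = x + b • (y - x) := by
    rw [← eq_sub_iff_add_eq] at hab
    rw [hab]
    module
  have hy' : x + (1 : ℝ) • (y - x) ∈ chordHull K E x := by simpa using hy
  rw [add_smul_mem_chordHull one_ne_zero] at hy'
  rw [h, add_smul_mem_chordHull hb.ne']
  refine le_trans ?_ hy'
  rw [Real.enorm_eq_ofReal hb.le, Real.enorm_eq_ofReal zero_le_one]
  gcongr
  linarith

variable [MeasurableSpace V] [BorelSpace V] [FiniteDimensional ℝ V]

theorem measurable_volume_chord {E : Set V} (hE : MeasurableSet E) :
    Measurable fun p : V × V ↦ volume {t : ℝ | p.1 + t • p.2 ∈ E} :=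
  measurable_measure_prodMk_left (ν := (volume : Measure ℝ))
    (s := {q : (V × V) × ℝ | q.1.1 + q.2 • q.1.2 ∈ E})
    (hE.preimage (f := fun q : (V × V) × ℝ ↦ q.1.1 + q.2 • q.1.2) (by fun_prop))

theorem measurableSet_chordHull (K : ℝ≥0∞) {E : Set V} (hE : MeasurableSet E) (x : V) :
    MeasurableSet (chordHull K E x) := by
  refine measurableSet_le measurable_const (Measurable.const_mul ?_ K)
  exact (measurable_volume_chord hE).comp (g := fun p : V × V ↦ _)
    (f := fun y ↦ (x, y - x)) (by fun_prop)

variable (μ : Measure V) [μ.IsAddHaarMeasure]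

/-- The integral over all directions of the `d`-th power of the length of the chord of `E`
through `x`, where `d` is the dimension. -/
def chordPower (E : Set V) (x : V) : ℝ≥0∞ :=
  ∫⁻ ξ : Metric.sphere (0 : V) 1,
    volume {t : ℝ | x + t • (ξ : V) ∈ E} ^ Module.finrank ℝ V ∂μ.toSphere

theorem measurable_volume_chord_sphere {E : Set V} (hE : MeasurableSet E) :
    Measurable fun p : V × Metric.sphere (0 : V) 1 ↦
      volume {t : ℝ | p.1 + t • (p.2 : V) ∈ E} :=
  (measurable_volume_chord hE).comp (g := fun p : V × V ↦ _)
    (f := fun p : V × Metric.sphere (0 : V) 1 ↦ (p.1, (p.2 : V))) (by fun_prop)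

theorem measurable_chordPower {E : Set V} (hE : MeasurableSet E) :
    Measurable (chordPower μ E) :=
  ((measurable_volume_chord_sphere hE).pow_const _).lintegral_prod_right'

theorem measurable_radial_integral {A : Set V} (hA : MeasurableSet A) (x : V) (m : ℕ) :
    Measurable fun ξ : Metric.sphere (0 : V) 1 ↦
      ∫⁻ r in {r : ℝ | x + r • (ξ : V) ∈ A}, ‖r‖ₑ ^ m := by
  have hS : MeasurableSet {p : Metric.sphere (0 : V) 1 × ℝ | x + p.2 • (p.1 : V) ∈ A} :=
    hA.preimage (f := fun p : Metric.sphere (0 : V) 1 × ℝ ↦ x + p.2 • (p.1 : V)) (by fun_prop)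
  have h : Measurable fun p : Metric.sphere (0 : V) 1 × ℝ ↦
      {p : Metric.sphere (0 : V) 1 × ℝ | x + p.2 • (p.1 : V) ∈ A}.indicator
        (fun p ↦ ‖p.2‖ₑ ^ m) p :=
    Measurable.indicator (by fun_prop) hS
  convert h.lintegral_prod_right' (ν := volume) using 2 with ξ
  exact (lintegral_indicator (measurable_prodMk_left (x := ξ) hS) _).symm

variable [Nontrivial V]

theorem chordPower_le {E : Set V} (hE : MeasurableSet E) (x : V) :
    chordPower μ E x ≤ 8 ^ Module.finrank ℝ V * (2 * μ E) := by
  have hd : Module.finrank ℝ V - 1 + 1 = Module.finrank ℝ V :=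
    Nat.sub_add_cancel Module.finrank_pos
  rw [two_mul_measure_eq_lintegral_toSphere μ hE x, ← lintegral_const_mul' _ _ (by simp)]
  refine lintegral_mono fun ξ ↦ ?_
  simpa only [hd] using volume_pow_succ_le {t : ℝ | x + t • (ξ : V) ∈ E} (Module.finrank ℝ V - 1)

theorem chordPower_le_add {E : Set V} (hE : MeasurableSet E) {x : V} (hx : x ∈ E)
    (hV : 2 ≤ Module.finrank ℝ V) {K : ℝ≥0∞} (hK : 1 ≤ K) (hK' : K ≠ ⊤) :
    chordPower μ E x ≤ 16 ^ Module.finrank ℝ V * (2 * μ (chordHull K E x ∩ E))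
      + 2 / K * (2 * μ E) := by
  have hd : Module.finrank ℝ V - 1 + 1 = Module.finrank ℝ V := by lia
  have hK0 : K ≠ 0 := (zero_lt_one.trans_le hK).ne'
  rw [two_mul_measure_eq_lintegral_toSphere μ hE x, two_mul_measure_eq_lintegral_toSphere μ
    ((measurableSet_chordHull K hE x).inter hE) x, ← lintegral_const_mul' _ _ (by simp),
    ← lintegral_const_mul' _ _ (ENNReal.div_ne_top (by simp) hK0), ← lintegral_add_right]
  · refine lintegral_mono fun ξ ↦ ?_
    have h := volume_pow_succ_le_add {t : ℝ | x + t • (ξ : V) ∈ E}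
      (m := Module.finrank ℝ V - 1) (by lia) hK hK'
    rw [hd] at h
    refine h.trans ?_
    gcongr
    rintro r ⟨hr, hr'⟩
    refine ⟨?_, hr⟩
    obtain rfl | hr0 := eq_or_ne r 0
    · simpa using self_mem_chordHull hK0 hx
    · exact (add_smul_mem_chordHull hr0).2 hr'
  · exact (measurable_radial_integral hE x _).const_mul _

theorem measure_chordHull_le {E : Set V} (hE : MeasurableSet E) (x : V) (K : ℝ≥0∞) (hK : K ≠ ⊤) :
    μ (chordHull K E x) ≤ K ^ Module.finrank ℝ V * chordPower μ E x := by
  have hd : Module.finrank ℝ V - 1 + 1 = Module.finrank ℝ V :=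
    Nat.sub_add_cancel Module.finrank_pos
  rw [← ENNReal.mul_le_mul_iff_right (a := 2) (by simp) (by simp),
    two_mul_measure_eq_lintegral_toSphere μ (measurableSet_chordHull K hE x) x, ← mul_assoc,
    chordPower, ← lintegral_const_mul' _ _ (by finiteness)]
  refine lintegral_mono fun ξ ↦ ?_
  rw [mul_assoc, ← mul_pow]
  have h := setLIntegral_enorm_pow_le (K * volume {t : ℝ | x + t • (ξ : V) ∈ E})
    (Module.finrank ℝ V - 1)
  rw [hd] at h
  refine le_trans (lintegral_mono_set fun r hr ↦ ?_) h
  obtain rfl | hr0 := eq_or_ne r 0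
  · simp
  · exact (add_smul_mem_chordHull hr0).1 hr

end ChordHull

theorem Jn_eq_setLIntegral_chordPower {n : ℕ} {E : Set (EuclideanSpace ℝ (Fin n))}
    (hE : MeasurableSet E) : Jn n E = ∫⁻ x in E, chordPower volume E x := by
  rw [Jn, lintegral_lintegral_swap]
  · simp [chordPower]
  · exact (((measurable_volume_chord_sphere hE).comp measurable_swap).pow_const n).aemeasurable

theorem ofReal_sub_div_mul_le {a b d : ℝ} (hb : 0 < b) (hd : 0 ≤ d) (hda : d ≤ a) {x y : ℝ≥0∞}
    (hx : x ≠ ⊤)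
    (h : ENNReal.ofReal a * x ≤ ENNReal.ofReal b * y + ENNReal.ofReal d * x) :
    ENNReal.ofReal ((a - d) / b) * x ≤ y := by
  obtain rfl | hy := eq_or_ne y ⊤
  · exact le_top
  rw [← ENNReal.ofReal_toReal hx, ← ENNReal.ofReal_toReal hy] at h ⊢
  have hx0 : 0 ≤ x.toReal := ENNReal.toReal_nonneg
  have hy0 : 0 ≤ y.toReal := ENNReal.toReal_nonneg
  have had : 0 ≤ a - d := sub_nonneg.2 hda
  rw [← ENNReal.ofReal_mul (hd.trans hda), ← ENNReal.ofReal_mul hb.le, ← ENNReal.ofReal_mul hd,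
    ← ENNReal.ofReal_add (by positivity) (by positivity),
    ENNReal.ofReal_le_ofReal_iff (by positivity)] at h
  rw [← ENNReal.ofReal_mul (by positivity)]
  refine ENNReal.ofReal_le_ofReal ?_
  rw [div_mul_eq_mul_div, div_le_iff₀ hb]
  linarith

theorem mul_measure_le_of_setLIntegral {α : Type*} [MeasurableSpace α] {μ : Measure α}
    {E : Set α} (hE0 : μ E ≠ 0) (hE1 : μ E ≠ ⊤) {g : α → ℝ≥0∞}
    (hg : Measurable g) {a B : ℝ≥0∞}
    (hB : ∀ x, g x ≤ B * μ E) (h : a * μ E ^ 2 ≤ ∫⁻ x in E, g x ∂μ) {d : ℝ≥0∞} :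
    a * μ E ≤ B * μ (E ∩ {x | d * μ E ≤ g x}) + d * μ E := by
  set S := {x | d * μ E ≤ g x}
  have hS : MeasurableSet S := measurableSet_le measurable_const hg
  rw [← ENNReal.mul_le_mul_iff_left hE0 hE1]
  calc a * μ E * μ E = a * μ E ^ 2 := by ring
    _ ≤ ∫⁻ x in E, g x ∂μ := h
    _ = (∫⁻ x in E ∩ S, g x ∂μ) + ∫⁻ x in E \ S, g x ∂μ :=
        (lintegral_inter_add_sdiff g E hS).symm
    _ ≤ (∫⁻ _ in E ∩ S, B * μ E ∂μ) + ∫⁻ _ in E \ S, d * μ E ∂μ := by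
        refine add_le_add (lintegral_mono hB) (setLIntegral_mono measurable_const fun x hx ↦ ?_)
        exact (not_le.1 hx.2).le
    _ ≤ B * μ E * μ (E ∩ S) + d * μ E * μ E := by
        rw [setLIntegral_const, setLIntegral_const]
        gcongr
        exact Set.sdiff_subset
    _ = _ := by ring

/-- a large convexity index forces star-convex sets at most points of `E`. -/
theorem statement16 (n : ℕ) (hn : 2 ≤ n) (c : ℝ) (hc : c ∈ Set.Ioo (0 : ℝ) 1) :
    ∃ c' : ℝ, c' ∈ Set.Ioo (0 : ℝ) 1 ∧
      ∀ E : Set (EuclideanSpace ℝ (Fin n)), MeasurableSet E →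
        0 < volume E → volume E < ⊤ →
        ENNReal.ofReal (c * (n : ℝ) * ((n : ℝ) + 1)) * (volume E) ^ 2 ≤ Jn n E →
        ∃ E' : Set (EuclideanSpace ℝ (Fin n)), E' ⊆ E ∧ MeasurableSet E' ∧
          ENNReal.ofReal c' * volume E ≤ volume E' ∧
          ∀ x ∈ E', ∃ F : Set (EuclideanSpace ℝ (Fin n)),
            MeasurableSet F ∧ StarConvex ℝ x F ∧
            ENNReal.ofReal c' * volume E ≤ volume F ∧
            volume F ≤ ENNReal.ofReal c'⁻¹ * volume E ∧
            ENNReal.ofReal c' * volume E ≤ volume (F ∩ E) := by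
  obtain ⟨hc0, -⟩ := hc
  have hn0 : (0 : ℝ) < n := by positivity
  set a : ℝ := c * n * (n + 1) with ha
  have ha0 : 0 < a := by positivity
  set K : ℝ := 16 / a + 1 with hK
  have hK0 : 0 < K := by positivity
  have hK1 : 1 ≤ K := le_add_of_nonneg_left (by positivity)
  have hKa : 2 / K * 2 ≤ a / 4 := by
    rw [div_mul_eq_mul_div, div_le_iff₀ hK0, hK]
    have : a * (16 / a) = 16 := mul_div_cancel₀ _ ha0.ne'
    linarith
  have hfr : Module.finrank ℝ (EuclideanSpace ℝ (Fin n)) = n := by simp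
  have : Nontrivial (EuclideanSpace ℝ (Fin n)) :=
    Module.nontrivial_of_finrank_pos (R := ℝ) (by rw [hfr]; lia)
  set c' : ℝ := min (min (1 / 2) ((a - a / 2) / (8 ^ n * 2)))
    (min ((a / 2 - a / 4) / (16 ^ n * 2)) (K ^ n * (8 ^ n * 2))⁻¹) with hc'
  have hc'0 : 0 < c' := by
    have h1 : 0 < a - a / 2 := by linarith
    have h2 : 0 < a / 2 - a / 4 := by linarith
    simp only [hc', lt_min_iff]
    refine ⟨⟨?_, ?_⟩, ?_, ?_⟩ <;> positivity
  have hc'1 : c' ≤ 1 / 2 := (min_le_left _ _).trans (min_le_left _ _)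
  have hc'2 : c' ≤ (a - a / 2) / (8 ^ n * 2) := (min_le_left _ _).trans (min_le_right _ _)
  have hc'3 : c' ≤ (a / 2 - a / 4) / (16 ^ n * 2) := (min_le_right _ _).trans (min_le_left _ _)
  have hc'4 : K ^ n * (8 ^ n * 2) ≤ c'⁻¹ :=
    (le_inv_comm₀ hc'0 (by positivity)).1 ((min_le_right _ _).trans (min_le_right _ _))
  have h8 : ENNReal.ofReal (8 ^ n * 2) = 8 ^ n * 2 := by
    rw [ENNReal.ofReal_mul (by positivity), ENNReal.ofReal_pow (by positivity)]
    simp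
  have h16 : ENNReal.ofReal (16 ^ n * 2) = 16 ^ n * 2 := by
    rw [ENNReal.ofReal_mul (by positivity), ENNReal.ofReal_pow (by positivity)]
    simp
  refine ⟨c', ⟨hc'0, by linarith⟩, fun E hE hE0 hE1 hJ ↦ ?_⟩
  have hG : ∀ x, chordPower volume E x ≤ ENNReal.ofReal (8 ^ n * 2) * volume E := fun x ↦ by
    simpa only [hfr, h8, mul_assoc] using chordPower_le volume hE x
  refine ⟨E ∩ {x | ENNReal.ofReal (a / 2) * volume E ≤ chordPower volume E x},
    Set.inter_subset_left, hE.inter (measurableSet_le measurable_const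
      (measurable_chordPower volume hE)), ?_, ?_⟩
  · rw [Jn_eq_setLIntegral_chordPower hE] at hJ
    refine le_trans (by gcongr) (ofReal_sub_div_mul_le (by positivity) (by positivity)
      (by linarith) hE1.ne (mul_measure_le_of_setLIntegral hE0.ne' hE1.ne
        (measurable_chordPower volume hE) hG hJ))
  · rintro x ⟨hxE, hx⟩
    have hFE : ENNReal.ofReal c' * volume E ≤
        volume (chordHull (ENNReal.ofReal K) E x ∩ E) := by
      refine le_trans (by gcongr) (ofReal_sub_div_mul_le (a := a / 2) (b := 16 ^ n * 2)
        (d := a / 4) (by positivity) (by positivity) (by linarith) hE1.ne ?_)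
      have h := chordPower_le_add volume hE hxE (hn.trans_eq hfr.symm) (K := ENNReal.ofReal K)
        (by simpa using hK1) (by simp)
      rw [hfr, ← mul_assoc, ← mul_assoc, ← h16] at h
      refine (hx.trans h).trans ?_
      gcongr
      calc 2 / ENNReal.ofReal K * 2 = ENNReal.ofReal (2 / K * 2) := by
            rw [ENNReal.ofReal_mul (by positivity), ENNReal.ofReal_div_of_pos hK0]
            simp
        _ ≤ _ := ENNReal.ofReal_le_ofReal hKa
    refine ⟨chordHull (ENNReal.ofReal K) E x, measurableSet_chordHull _ hE x,
      starConvex_chordHull (by simpa using hK0) hxE,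
      hFE.trans (measure_mono Set.inter_subset_left), ?_, hFE⟩
    calc volume (chordHull (ENNReal.ofReal K) E x)
        ≤ ENNReal.ofReal K ^ n * chordPower volume E x := by
          simpa only [hfr] using measure_chordHull_le volume hE x _ ENNReal.ofReal_ne_top
      _ ≤ ENNReal.ofReal K ^ n * (ENNReal.ofReal (8 ^ n * 2) * volume E) := by
          gcongr
          exact hG x
      _ = ENNReal.ofReal (K ^ n * (8 ^ n * 2)) * volume E := by
          rw [ENNReal.ofReal_mul (p := K ^ n) (by positivity), ENNReal.ofReal_pow hK0.le,
            mul_assoc]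
      _ ≤ ENNReal.ofReal c'⁻¹ * volume E := by gcongr
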